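/- Two K-programs P and Q are single-pass congruent (denote the same SPI) if and only if the equation P = Q is derivable in the proof system L_spc. -/

import Mathlib

/-- Primitive instructions over a set `A` of basic instructions:
basic instructions `a`, positive tests `+a`, negative tests `-a`,
jump instructions `#k` and the termination instruction `!`. -/
inductive PrimInstr (A : Type) : Type where
  | basic (a : A)
  | pos (a : A)
  | neg (a : A)
  | jump (k : Nat)
  | halt
deriving DecidableEq

/-- Instructions of the semigroup `L`: primitive instructions and
repeat instructions (repeaters) `↰n`.  (Genuine repeaters have `n ≥ 1`;
this is imposed as a hypothesis wherever relevant.) -/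
inductive Instr (A : Type) : Type where
  | prim (u : PrimInstr A)
  | rep (n : Nat)
deriving DecidableEq

/-- Is this instruction a repeater? -/
def Instr.isRep {A : Type} : Instr A → Bool
  | .rep _ => true
  | .prim _ => false

/-- `↰n` is a genuine repeat instruction only for `n ≥ 1`. -/
def Instr.valid {A : Type} : Instr A → Prop
  | .prim _ => True
  | .rep n => 1 ≤ n

/-- Terms of the semigroup `L`: finite nonempty sequences of instructions
under (associative) concatenation. -/
inductive LTerm (A : Type) : Type where
  | instr (i : Instr A)
  | seq (s t : LTerm A)
deriving DecidableEq

/-- The (nonempty) sequence of instructions an `L`-term consists of. -/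
def LTerm.flat {A : Type} : LTerm A → List (Instr A)
  | .instr i => [i]
  | .seq s t => s.flat ++ t.flat

/-- `cat [i_1, …, i_n] t` is the `L`-term `i_1 ; … ; i_n ; t`. -/
def cat {A : Type} : List (Instr A) → LTerm A → LTerm A
  | [], t => t
  | i :: l, t => (LTerm.instr i).seq (cat l t)

/-- `pcat [u_1, …, u_n] t` is the `L`-term `u_1 ; … ; u_n ; t`
for primitive instructions `u_i`. -/
def pcat {A : Type} (l : List (PrimInstr A)) (t : LTerm A) : LTerm A :=
  cat (l.map Instr.prim) t

/-- `listPow l m` is the `m`-fold concatenation `l^m` of the list `l`. -/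
def listPow {α : Type} (l : List α) : ℕ → List α
  | 0 => []
  | n+1 => l ++ listPow l n

/-- The primitive instructions occurring in an instruction sequence. -/
def primsOf {A : Type} (l : List (Instr A)) : List (PrimInstr A) :=
  l.filterMap fun i => match i with
    | .prim u => some u
    | .rep _ => none

/-- The counter of the final repeat instruction of an instruction sequence, if any. -/
def repOf {A : Type} (l : List (Instr A)) : Option ℕ :=
  match l.getLast? with
  | some (.rep n) => some n
  | _ => none

/-- Position lookup for the SPI denoted by `u_1 ; … ; u_k ; ↰n` (`us` the list of
the `u_i`): positions beyond the end wrap around through the last `n` instructions. -/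
def kAt {A : Type} (us : List (PrimInstr A)) (n : ℕ) (p : ℕ) : Option (PrimInstr A) :=
  if p < us.length then us[p]?
  else us[us.length - n + (p - (us.length - n)) % n]?

/-- The SPI denoted by a `K`-program, given as position lookup on its
instruction sequence: a repeater-free `K`-program `u_1 ; … ; u_n` denotes
`u_1 ; … ; u_n` and `u_1 ; … ; u_k ; ↰n` (`n ≤ k`) denotes `u_1 ; … ; u_{k-n}`
followed by the infinite repetition of `u_{k-n+1} ; … ; u_k`. -/
def kDen {A : Type} (l : List (Instr A)) : ℕ → Option (PrimInstr A) :=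
  match repOf l with
  | none => fun p => (primsOf l)[p]?
  | some n => kAt (primsOf l) n

/-- `K`-programs: first canonical `L`-forms `u_1 ; … ; u_k` (all `u_i`
primitive), or `u_1 ; … ; u_k ; ↰n` with `1 ≤ n ≤ k`. -/
def IsKProg {A : Type} (t : LTerm A) : Prop :=
  (∃ (u : PrimInstr A) (us : List (PrimInstr A)), t.flat = (u :: us).map Instr.prim) ∨
  (∃ (u : PrimInstr A) (us : List (PrimInstr A)) (n : ℕ),
     t.flat = (u :: us).map Instr.prim ++ [Instr.rep n] ∧ 1 ≤ n ∧ n ≤ (u :: us).length)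

/-- The proof system `L_spc`: equational-logic derivability from the axioms (1)-(4) for single-pass congruence on `L` (associativity, unfolding of repeat counters, absorption `↰n ; X = ↰n`, and rotation), where `u_i`, `v_j` range over primitive instructions and `m, n ≥ 1`. -/
inductive DerivLspc {{A : Type}} : LTerm A → LTerm A → Prop
  | refl (t : LTerm A) : DerivLspc t t
  | symm {{s t : LTerm A}} : DerivLspc s t → DerivLspc t s
  | trans {{s t u : LTerm A}} : DerivLspc s t → DerivLspc t u → DerivLspc s u
  | seq_congr {{s s' t t' : LTerm A}} : DerivLspc s s' → DerivLspc t t' → DerivLspc (s.seq t) (s'.seq t')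
  | assoc (s t u : LTerm A) : DerivLspc ((s.seq t).seq u) (s.seq (t.seq u))
  | ax2 (u : PrimInstr A) (us : List (PrimInstr A)) (m : ℕ) (hm : 1 ≤ m) :
      DerivLspc (pcat (u :: us) (.instr (.rep (u :: us).length)))
          (pcat (listPow (u :: us) m) (.instr (.rep (m * (u :: us).length))))
  | ax3 (n : ℕ) (hn : 1 ≤ n) (t : LTerm A) :
      DerivLspc ((LTerm.instr (.rep n)).seq t) (.instr (.rep n))
  | ax4 (u : PrimInstr A) (us : List (PrimInstr A)) (v : PrimInstr A) (vs : List (PrimInstr A)) :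
      DerivLspc
        (pcat ((u :: us) ++ (v :: vs)) (.instr (.rep ((u :: us).length + (v :: vs).length))))
        (pcat ((u :: us) ++ (v :: vs) ++ (u :: us)) (.instr (.rep ((u :: us).length + (v :: vs).length))))

section KHelpers
variable {A : Type}

def semT : LTerm A → (List (PrimInstr A)) ⊕ (List (PrimInstr A) → ℕ → Option (PrimInstr A))
  | .instr (.prim u) => .inl [u]
  | .instr (.rep n) => .inr (fun c => kAt c n)
  | .seq s t =>
    match semT s with
    | .inr f => .inr f
    | .inl l =>
      match semT t with
      | .inl l' => .inl (l ++ l')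
      | .inr f => .inr (fun c => f (c ++ l))

theorem semT_pcat_rep (l : List (PrimInstr A)) (n : ℕ) :
    semT (pcat l (.instr (.rep n))) = .inr (fun c => kAt (c ++ l) n) := by
  unfold pcat
  induction l with
  | nil => simp [cat, semT]
  | cons a l ih => simp [cat, semT, ih]

theorem semT_pcat_prim (l : List (PrimInstr A)) (u : PrimInstr A) :
    semT (pcat l (.instr (.prim u))) = .inl (l ++ [u]) := by
  unfold pcat
  induction l with
  | nil => simp [cat, semT]
  | cons a l ih => simp [cat, semT, ih]

theorem kAt_app (c b : List (PrimInstr A)) (n : ℕ) (hb : b.length = n) (p : ℕ) :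
    kAt (c ++ b) n p = if p < c.length then ((c)[p]?) else (b[(p - c.length) % n]?) := by
  subst hb
  unfold kAt
  have e : (c ++ b).length - b.length = c.length := by simp
  rw [e, List.length_append]
  split_ifs with h1 h2 h2
  · rw [List.getElem?_append_left h2]
  · rw [List.getElem?_append_right (by omega), Nat.mod_eq_of_lt (by omega)]
  · omega
  · rw [List.getElem?_append_right (by omega)]
    congr 1
    omega

theorem listPow_len (b : List (PrimInstr A)) (m : ℕ) : (listPow b m).length = m * b.length := by
  induction m with
  | zero => simp [listPow]
  | succ m ih => simp [listPow, ih]; ring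

theorem listPow_get (b : List (PrimInstr A)) (m i : ℕ) (hi : i < m * b.length) :
    (listPow b m)[i]? = b[i % b.length]? := by
  induction m generalizing i with
  | zero => simp at hi
  | succ m ih =>
    simp only [listPow]
    by_cases h : i < b.length
    · rw [List.getElem?_append_left h, Nat.mod_eq_of_lt h]
    · push Not at h
      rw [List.getElem?_append_right h, ih _ (by rw [Nat.succ_mul] at hi; omega),
        Nat.mod_eq_sub_mod h]

theorem kAt_ax2 (c b : List (PrimInstr A)) (hb : 1 ≤ b.length) (m : ℕ) (hm : 1 ≤ m) :
    kAt (c ++ b) b.length = kAt (c ++ listPow b m) (m * b.length) := by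
  funext p
  rw [kAt_app c b _ rfl, kAt_app c _ _ (listPow_len b m)]
  split_ifs with h
  · rfl
  · rw [listPow_get _ _ _ (Nat.mod_lt _ (Nat.mul_pos hm hb)), Nat.mod_mul_left_mod]

theorem kAt_ax4 (c u v : List (PrimInstr A)) (hn : 1 ≤ u.length + v.length) :
    kAt (c ++ (u ++ v)) (u.length + v.length) =
      kAt (c ++ (u ++ v ++ u)) (u.length + v.length) := by
  funext p
  have e : c ++ (u ++ v ++ u) = (c ++ u) ++ (v ++ u) := by simp
  rw [e, kAt_app c (u ++ v) _ (by simp), kAt_app (c ++ u) (v ++ u) _ (by simp; omega)]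
  rw [List.length_append]
  split_ifs with h1 h2 h2
  · rw [List.getElem?_append_left h1]
  · omega
  · rw [List.getElem?_append_right (l₁ := c) (by omega), Nat.mod_eq_of_lt (by omega),
      List.getElem?_append_left (by omega)]
  · obtain ⟨q, rfl⟩ : ∃ q, p = c.length + u.length + q := ⟨p - (c.length + u.length), by omega⟩
    have e1 : c.length + u.length + q - c.length = q + u.length := by omega
    have e2 : c.length + u.length + q - (c.length + u.length) = q := by omega
    rw [e1, e2, Nat.add_mod]
    have hr := Nat.mod_lt q hn
    generalize q % (u.length + v.length) = r at hr
    have hadd : (r + u.length % (u.length + v.length)) % (u.length + v.length)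
        = (r + u.length) % (u.length + v.length) := by simp
    rw [hadd]
    by_cases h : r < v.length
    · rw [Nat.mod_eq_of_lt (by omega), List.getElem?_append_right (by omega),
        List.getElem?_append_left h]
      congr 1; omega
    · rw [Nat.mod_eq_sub_mod (by omega), Nat.mod_eq_of_lt (by omega),
        List.getElem?_append_left (by omega), List.getElem?_append_right (by omega)]
      congr 1; omega

theorem semT_sound {s t : LTerm A} (h : DerivLspc s t) : semT s = semT t := by
  induction h with
  | refl t => rfl
  | symm _ ih => exact ih.symm
  | trans _ _ ih1 ih2 => exact ih1.trans ih2
  | seq_congr _ _ ih1 ih2 => simp only [semT, ih1, ih2]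
  | assoc s t u =>
    simp only [semT]
    cases semT s <;> cases semT t <;> cases semT u <;> simp
  | ax2 u us m hm =>
    rw [semT_pcat_rep, semT_pcat_rep]
    congr 1; funext c
    exact kAt_ax2 c (u :: us) (by simp) m hm
  | ax3 n hn t => simp [semT]
  | ax4 u us v vs =>
    rw [semT_pcat_rep, semT_pcat_rep]
    congr 1; funext c
    exact kAt_ax4 c (u :: us) (v :: vs) (by simp; omega)

theorem cat_append (l l' : List (Instr A)) (t : LTerm A) : cat (l ++ l') t = cat l (cat l' t) := by
  induction l with
  | nil => rfl
  | cons a l ih => simp [cat, ih]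

theorem cat_congr (l : List (Instr A)) {s t : LTerm A} (h : DerivLspc s t) :
    DerivLspc (cat l s) (cat l t) := by
  induction l with
  | nil => exact h
  | cons a l ih => exact .seq_congr (.refl _) ih

theorem seq_cat (s t : LTerm A) : DerivLspc (s.seq t) (cat s.flat t) := by
  induction s generalizing t with
  | instr i => exact .refl _
  | seq a b iha ihb =>
    simp only [LTerm.flat, cat_append]
    exact .trans (.assoc _ _ _) (.trans (iha _) (cat_congr _ (ihb t)))

theorem flat_ne (t : LTerm A) : t.flat ≠ [] := by
  induction t with
  | instr i => simp [LTerm.flat]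
  | seq a b iha ihb => simp [LTerm.flat, iha]

theorem canon (t : LTerm A) (l : List (Instr A)) (i : Instr A) (h : t.flat = l ++ [i]) :
    DerivLspc t (cat l (.instr i)) := by
  induction t generalizing l i with
  | instr j =>
    cases l with
    | nil => simp [LTerm.flat] at h; subst h; exact .refl _
    | cons a l => simp [LTerm.flat] at h
  | seq s t _ iht =>
    obtain ⟨l2, j, hj⟩ := List.eq_nil_or_concat' t.flat |>.resolve_left (flat_ne t)
    simp only [LTerm.flat, hj, ← List.append_assoc] at h
    obtain ⟨h1, h2⟩ := List.append_inj' h rfl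
    simp at h2
    subst h1 h2
    rw [cat_append]
    exact .trans (seq_cat _ _) (cat_congr _ (iht _ _ hj))

theorem pcat_append (l l' : List (PrimInstr A)) (t : LTerm A) :
    pcat (l ++ l') t = pcat l (pcat l' t) := by
  simp [pcat, cat_append]

abbrev rp (w : List (PrimInstr A)) (n : ℕ) : LTerm A := pcat w (.instr (.rep n))

theorem rp_kAt {w w' : List (PrimInstr A)} {n n' : ℕ} (h : DerivLspc (rp w n) (rp w' n')) :
    kAt w n = kAt w' n' := by
  have := semT_sound h
  rw [semT_pcat_rep, semT_pcat_rep] at this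
  simpa using congrFun (Sum.inr.inj this) []

theorem split_last (w : List (PrimInstr A)) (n : ℕ) (hn : 1 ≤ n) (h : n ≤ w.length) :
    ∃ a u us, w = a ++ (u :: us) ∧ (u :: us).length = n := by
  have hl : (w.drop (w.length - n)).length = n := by simp; omega
  cases hb : w.drop (w.length - n) with
  | nil => rw [hb] at hl; simp at hl; omega
  | cons u us =>
    exact ⟨w.take (w.length - n), u, us, by rw [← hb, List.take_append_drop], by rw [← hb, hl]⟩

theorem ext_one (w : List (PrimInstr A)) (n : ℕ) (hn : 1 ≤ n) (h : n ≤ w.length) :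
    ∃ w', w'.length = w.length + 1 ∧ DerivLspc (rp w n) (rp w' n) := by
  obtain ⟨a, u, us, rfl, hl⟩ := split_last w n hn h
  refine ⟨a ++ ((u :: us) ++ [u]), by simp; omega, ?_⟩
  rw [rp, rp, pcat_append, pcat_append]
  refine cat_congr _ ?_
  cases us with
  | nil =>
    simp at hl
    subst hl
    have h2 := DerivLspc.ax2 u [] 2 (by norm_num)
    have h4 := DerivLspc.ax4 u [] u []
    have h5 : DerivLspc (pcat [u] (pcat [u] (.instr (.rep 1))))
        (pcat [u] (pcat [u, u] (.instr (.rep 2)))) := cat_congr _ h2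
    exact .trans h2 (.trans h4 (.symm h5))
  | cons v vs =>
    have h4 := DerivLspc.ax4 u [] v vs
    have e : [u].length + (v :: vs).length = n := by rw [← hl]; simp; omega
    rw [e] at h4
    exact h4

theorem ext_many (w : List (PrimInstr A)) (n : ℕ) (hn : 1 ≤ n) (h : n ≤ w.length) (d : ℕ) :
    ∃ w', w'.length = w.length + d ∧ DerivLspc (rp w n) (rp w' n) := by
  induction d with
  | zero => exact ⟨w, rfl, .refl _⟩
  | succ d ih =>
    obtain ⟨w1, h1, h2⟩ := ih
    obtain ⟨w2, h3, h4⟩ := ext_one w1 n hn (by omega)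
    exact ⟨w2, by omega, .trans h2 h4⟩

theorem ext_to (w : List (PrimInstr A)) (n : ℕ) (hn : 1 ≤ n) (h : n ≤ w.length)
    (m : ℕ) (hm : 1 ≤ m) (L : ℕ) (hL : w.length + m * n ≤ L) :
    ∃ w', w'.length = L ∧ DerivLspc (rp w n) (rp w' (m * n)) := by
  obtain ⟨a, u, us, rfl, hl⟩ := split_last w n hn h
  have h2 := DerivLspc.ax2 u us m hm
  have hlp := listPow_len (u :: us) m
  rw [hl] at h2 hlp
  have h3 : DerivLspc (rp (a ++ (u :: us)) n) (rp (a ++ listPow (u :: us) m) (m * n)) := by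
    rw [rp, rp, pcat_append, pcat_append]
    exact cat_congr _ h2
  have hlen : (a ++ listPow (u :: us) m).length ≤ L := by
    rw [List.length_append, hlp]
    rw [List.length_append] at hL; omega
  obtain ⟨w', h4, h5⟩ := ext_many (a ++ listPow (u :: us) m) (m * n) (Nat.mul_pos hm hn)
    (by rw [List.length_append, hlp]; omega) (L - (a ++ listPow (u :: us) m).length)
  exact ⟨w', by omega, .trans h3 h5⟩

theorem complete_rep (w v : List (PrimInstr A)) (n m : ℕ) (hn : 1 ≤ n) (h : n ≤ w.length)
    (hm : 1 ≤ m) (h' : m ≤ v.length) (hk : kAt w n = kAt v m) : DerivLspc (rp w n) (rp v m) := by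
  obtain ⟨w', a1, a2⟩ := ext_to w n hn h m hm (w.length + v.length + m * n) (by omega)
  obtain ⟨v', b1, b2⟩ := ext_to v m hm h' n hn (w.length + v.length + m * n)
    (by rw [Nat.mul_comm n m]; omega)
  rw [Nat.mul_comm n m] at b2
  have hk' : kAt w' (m * n) = kAt v' (m * n) := by rw [← rp_kAt a2, hk, rp_kAt b2]
  have : w' = v' := by
    apply List.ext_getElem?
    intro p
    by_cases hp : p < w.length + v.length + m * n
    · have := congrFun hk' p
      unfold kAt at this
      rwa [if_pos (by omega), if_pos (by omega)] at this
    · rw [List.getElem?_eq_none (by omega), List.getElem?_eq_none (by omega)]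
  subst this
  exact .trans a2 (.symm b2)

theorem kAt_ne_none (w : List (PrimInstr A)) (n : ℕ) (hn : 1 ≤ n) (h : n ≤ w.length) (p : ℕ) :
    kAt w n p ≠ none := by
  unfold kAt
  have := Nat.mod_lt (p - (w.length - n)) hn
  split_ifs with h1
  · simp; omega
  · simp; omega

theorem primsOf_map (l : List (PrimInstr A)) : primsOf (l.map Instr.prim) = l := by
  induction l with
  | nil => rfl
  | cons a l ih => simpa [primsOf] using ih

theorem primsOf_map_rep (l : List (PrimInstr A)) (n : ℕ) :
    primsOf (l.map Instr.prim ++ [Instr.rep n]) = l := by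
  have := primsOf_map l
  unfold primsOf at *
  rw [List.filterMap_append, this]
  simp

theorem kDen_fin (l : List (PrimInstr A)) : kDen (l.map Instr.prim) = fun p => l[p]? := by
  have : repOf (l.map Instr.prim) = none := by
    unfold repOf
    rw [List.getLast?_map]
    cases l.getLast? <;> simp
  unfold kDen
  rw [this, primsOf_map]

theorem kDen_rep (l : List (PrimInstr A)) (n : ℕ) :
    kDen (l.map Instr.prim ++ [Instr.rep n]) = kAt l n := by
  have : repOf (l.map Instr.prim ++ [Instr.rep n]) = some n := by
    simp [repOf]
  unfold kDen
  rw [this, primsOf_map_rep]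

theorem canon_fin (t : LTerm A) (u : PrimInstr A) (us : List (PrimInstr A))
    (h : t.flat = (u :: us).map Instr.prim) :
    ∃ l i, u :: us = l ++ [i] ∧ DerivLspc t (pcat l (.instr (.prim i))) := by
  obtain ⟨l, i, hl⟩ := List.eq_nil_or_concat' (u :: us) |>.resolve_left (by simp)
  refine ⟨l, i, hl, canon t _ _ ?_⟩
  rw [h, hl]; simp

theorem semT_fin (t : LTerm A) (u : PrimInstr A) (us : List (PrimInstr A))
    (h : t.flat = (u :: us).map Instr.prim) : semT t = .inl (u :: us) := by
  obtain ⟨l, i, hl, hd⟩ := canon_fin t u us h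
  rw [semT_sound hd, semT_pcat_prim, hl]

end KHelpers

/-- Two `K`-programs are single-pass congruent (denote the same SPI) if and
only if their equality is derivable in the proof system `L_spc`. -/
theorem K_single_pass_congruence_iff_Lspc (A : Type) (P Q : LTerm A)
    (hP : IsKProg P) (hQ : IsKProg Q) :
    kDen P.flat = kDen Q.flat ↔ DerivLspc P Q := by
  rcases hP with ⟨u, us, hp⟩ | ⟨u, us, n, hp, hn, hn'⟩ <;>
    rcases hQ with ⟨v, vs, hq⟩ | ⟨v, vs, m, hq, hm, hm'⟩
  · rw [hp, hq, kDen_fin, kDen_fin]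
    constructor
    · intro h
      have e : u :: us = v :: vs := List.ext_getElem? (fun p => congrFun h p)
      obtain ⟨l, i, hl, hd⟩ := canon_fin P u us hp
      have hd' := canon Q (l.map Instr.prim) (Instr.prim i) (by rw [hq, ← e, hl]; simp)
      exact .trans hd (.symm hd')
    · intro h
      have := semT_sound h
      rw [semT_fin P u us hp, semT_fin Q v vs hq] at this
      rw [Sum.inl.inj this]
  · rw [hp, hq, kDen_fin, kDen_rep]
    constructor
    · intro h
      exact absurd ((congrFun h (u :: us).length).symm.trans (by simp))
        (kAt_ne_none _ _ hm hm' _)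
    · intro h
      have := semT_sound (h.trans (canon Q _ _ hq))
      rw [semT_fin P u us hp] at this
      exact absurd (this.trans (semT_pcat_rep (v :: vs) m)) (by simp)
  · rw [hp, hq, kDen_fin, kDen_rep]
    constructor
    · intro h
      exact absurd ((congrFun h (v :: vs).length).trans (by simp))
        (kAt_ne_none _ _ hn hn' _)
    · intro h
      have := semT_sound (h.symm.trans (canon P _ _ hp))
      rw [semT_fin Q v vs hq] at this
      exact absurd (this.trans (semT_pcat_rep (u :: us) n)) (by simp)
  · rw [hp, hq, kDen_rep, kDen_rep]
    have cP : DerivLspc P (rp (u :: us) n) := canon P _ _ hp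
    have cQ : DerivLspc Q (rp (v :: vs) m) := canon Q _ _ hq
    constructor
    · intro h
      exact cP.trans ((complete_rep _ _ _ _ hn hn' hm hm' h).trans cQ.symm)
    · intro h
      exact rp_kAt (cP.symm.trans (h.trans cQ))
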